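/- Let n ≥ 1 and let f be a cluster-additive function on ℤA_n. Then f is σ-invariant: f(σ(z)) = f(z) for every vertex z of ℤA_n. -/

import Mathlib

/-- A function on the vertices of `ℤA_n` (pairs `(i,p)` with `1 ≤ p ≤ n`) is
cluster-additive if every mesh relation holds, where `t⁺ = max t 0`. -/
def ZAClusterAdditive (n : ℤ) (f : ℤ × ℤ → ℤ) : Prop :=
  ∀ i p : ℤ, 1 ≤ p → p ≤ n →
    f (i, p) + f (i - 1, p) =
      (if 2 ≤ p then max (f (i, p - 1)) 0 else 0) +
      (if p ≤ n - 1 then max (f (i - 1, p + 1)) 0 else 0)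

/-- The translation-quiver automorphism `σ(i,p) = (i+p+1, n+1−p)` of `ℤA_n`,
realizing the functor `F = τ⁻¹[1]`. -/
def ZASigma (n : ℤ) (v : ℤ × ℤ) : ℤ × ℤ := (v.1 + v.2 + 1, n + 1 - v.2)

/-- `g t = t * d + O(1)`. -/
def ZABd (g : ℕ → ℝ) (d : ℤ) : Prop := ∃ C : ℝ, ∀ t : ℕ, |g t - t * d| ≤ C

theorem ZABd.add {g h : ℕ → ℝ} {d e : ℤ} (hg : ZABd g d) (hh : ZABd h e) :
    ZABd (fun t => g t + h t) (d + e) := by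
  obtain ⟨C, hC⟩ := hg
  obtain ⟨E, hE⟩ := hh
  refine ⟨C + E, fun t => ?_⟩
  have h1 := abs_le.1 (hC t)
  have h2 := abs_le.1 (hE t)
  push_cast
  rw [abs_le]
  constructor <;> nlinarith

theorem ZABd.sub {g h : ℕ → ℝ} {d e : ℤ} (hg : ZABd g d) (hh : ZABd h e) :
    ZABd (fun t => g t - h t) (d - e) := by
  obtain ⟨C, hC⟩ := hg
  obtain ⟨E, hE⟩ := hh
  refine ⟨C + E, fun t => ?_⟩
  have h1 := abs_le.1 (hC t)
  have h2 := abs_le.1 (hE t)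
  push_cast
  rw [abs_le]
  constructor <;> nlinarith

theorem ZABd.unique {g : ℕ → ℝ} {d e : ℤ} (hg : ZABd g d) (hh : ZABd g e) : d = e := by
  obtain ⟨C, hC⟩ := hg.sub hh
  by_contra hne
  have hne' : (1 : ℤ) ≤ |d - e| := Int.one_le_abs (sub_ne_zero.2 hne)
  have hne2 : (1 : ℝ) ≤ |((d - e : ℤ) : ℝ)| := by exact_mod_cast hne'
  obtain ⟨t, ht⟩ := exists_nat_gt C
  have h := hC t
  simp only [sub_self, zero_sub, abs_neg, abs_mul, Nat.abs_cast] at h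
  have ht0 : (0 : ℝ) ≤ t := Nat.cast_nonneg t
  nlinarith

theorem ZABd.softplus {w : ℕ → ℝ} {d : ℤ} (hw : ∀ t, 0 < w t)
    (hg : ZABd (fun t => Real.log (w t)) d) :
    ZABd (fun t => Real.log (1 + w t)) (max d 0) := by
  obtain ⟨C, hC⟩ := hg
  refine ⟨C + Real.log 2, fun t => ?_⟩
  have h1 := abs_le.1 (hC t)
  have hp := hw t
  have l2 : 0 < Real.log 2 := Real.log_pos (by norm_num)
  have a1 : 0 ≤ Real.log (1 + w t) := Real.log_nonneg (by linarith)
  have a2 : Real.log (w t) ≤ Real.log (1 + w t) := Real.log_le_log hp (by linarith)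
  have ht0 : (0 : ℝ) ≤ t := Nat.cast_nonneg t
  have a3 : Real.log (1 + w t) ≤ max (Real.log (w t)) 0 + Real.log 2 := by
    rcases le_total (w t) 1 with h | h
    · have : Real.log (1 + w t) ≤ Real.log 2 := Real.log_le_log (by linarith) (by linarith)
      have := le_max_right (Real.log (w t)) 0
      linarith
    · have : Real.log (1 + w t) ≤ Real.log (w t * 2) :=
        Real.log_le_log (by linarith) (by linarith)
      rw [Real.log_mul hp.ne' (by norm_num)] at this
      have := le_max_left (Real.log (w t)) 0
      linarith
  rw [abs_le]
  rcases le_total d 0 with h | h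
  · rw [max_eq_right h]
    have hd : (t : ℝ) * d ≤ 0 := mul_nonpos_of_nonneg_of_nonpos ht0 (by exact_mod_cast h)
    have : max (Real.log (w t)) 0 ≤ C := max_le (by linarith) (by linarith)
    push_cast
    constructor <;> linarith
  · rw [max_eq_left h]
    have hd : 0 ≤ (t : ℝ) * d := mul_nonneg ht0 (by exact_mod_cast h)
    have : max (Real.log (w t)) 0 ≤ C + t * d := max_le (by linarith) (by linarith)
    constructor <;> linarith

/-- The affine coordinates of the points, built from the values `y` on a row. -/
noncomputable def ZAS (y : ℕ → ℝ) : ℕ → ℝ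
  | 0 => 0
  | k + 1 => ZAS y k + (if k = 0 then 1 else ZAS y k / y k)

theorem ZAS_pos (y : ℕ → ℝ) (hy : ∀ k, 0 < y k) (k : ℕ) : 0 < ZAS y (k + 1) := by
  induction k with
  | zero => simp [ZAS]
  | succ k ih =>
    rw [ZAS]
    have := div_pos ih (hy (k + 1))
    simp
    linarith

theorem ZAS_mono (y : ℕ → ℝ) (hy : ∀ k, 0 < y k) : StrictMono (ZAS y) := by
  refine strictMono_nat_of_lt_succ fun k => ?_
  rw [ZAS]
  rcases k with _ | k
  · simp
  · have := div_pos (ZAS_pos y hy k) (hy (k + 1))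
    simp
    linarith

/-- First coordinate of the vectors. -/
noncomputable def ZAX (n : ℤ) (j : ℤ) : ℝ :=
  if j ≤ 0 then 0 else if j ≤ n + 2 then 1 else if j = n + 3 then 0 else -1

/-- Second coordinate of the vectors. -/
noncomputable def ZAV (n : ℤ) (y : ℕ → ℝ) (j : ℤ) : ℝ :=
  if j ≤ 0 then -1 else if j ≤ n + 2 then ZAS y (j - 1).toNat else if j = n + 3 then 1 else 0

/-- Minors. -/
noncomputable def ZAD (n : ℤ) (y : ℕ → ℝ) (a b : ℤ) : ℝ :=
  ZAX n a * ZAV n y b - ZAX n b * ZAV n y a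

theorem ZAD_pos (n : ℤ) (hn : 1 ≤ n) (y : ℕ → ℝ) (hy : ∀ k, 0 < y k) (a b : ℤ)
    (ha : 0 ≤ a) (hab : a < b) (hb : b ≤ n + 4) (hd : b - a < n + 3) : 0 < ZAD n y a b := by
  have hcase : a = 0 ∨ (1 ≤ a ∧ b ≤ n + 2) ∨ (1 ≤ a ∧ a ≤ n + 2 ∧ b = n + 3) ∨
      (2 ≤ a ∧ a ≤ n + 2 ∧ b = n + 4) ∨ (a = n + 3 ∧ b = n + 4) := by omega
  unfold ZAD ZAX ZAV
  rcases hcase with h | ⟨h1, h2⟩ | ⟨h1, h2, h3⟩ | ⟨h1, h2, h3⟩ | ⟨h1, h2⟩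
  · subst h
    simp [show ¬ b ≤ 0 by omega, show b ≤ n + 2 by omega]
  · rw [if_neg (show ¬ a ≤ 0 by omega), if_pos (show a ≤ n + 2 by omega),
      if_neg (show ¬ b ≤ 0 by omega), if_pos h2, if_neg (show ¬ b ≤ 0 by omega), if_pos h2,
      if_neg (show ¬ a ≤ 0 by omega), if_pos (show a ≤ n + 2 by omega)]
    have := ZAS_mono y hy (show (a - 1).toNat < (b - 1).toNat by omega)
    linarith
  · subst h3
    simp [show ¬ a ≤ 0 by omega, h2, show ¬ n + 3 ≤ 0 by omega]
  · subst h3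
    simp [show ¬ a ≤ 0 by omega, h2, show ¬ n + 4 ≤ 0 by omega]
    have := ZAS_mono y hy (show 0 < (a - 1).toNat by omega)
    simpa [ZAS] using this
  · subst h1 h2
    simp [show ¬ n + 4 ≤ 0 by omega, show ¬ n + 3 ≤ 0 by omega]

/-- Cross ratios. -/
noncomputable def ZAW (n : ℤ) (y : ℕ → ℝ) (i p : ℤ) : ℝ :=
  ZAD n y (i + 1) (i + p + 1) * ZAD n y i (i + p + 2) /
    (ZAD n y i (i + 1) * ZAD n y (i + p + 1) (i + p + 2))

theorem ZAW_pos (n : ℤ) (hn : 1 ≤ n) (y : ℕ → ℝ) (hy : ∀ k, 0 < y k) (i p : ℤ)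
    (hi : 0 ≤ i) (hp : 1 ≤ p) (hpn : p ≤ n) (hip : i + p ≤ n + 2) : 0 < ZAW n y i p := by
  unfold ZAW
  have h1 := ZAD_pos n hn y hy (i + 1) (i + p + 1) (by omega) (by omega) (by omega) (by omega)
  have h2 := ZAD_pos n hn y hy i (i + p + 2) (by omega) (by omega) (by omega) (by omega)
  have h3 := ZAD_pos n hn y hy i (i + 1) (by omega) (by omega) (by omega) (by omega)
  have h4 := ZAD_pos n hn y hy (i + p + 1) (i + p + 2) (by omega) (by omega) (by omega) (by omega)
  positivity

theorem ZAW_one_add (n : ℤ) (hn : 1 ≤ n) (y : ℕ → ℝ) (hy : ∀ k, 0 < y k) (i p : ℤ)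
    (hi : 0 ≤ i) (hp : 0 ≤ p) (hip : i + p ≤ n + 2) (hin : i ≤ n + 2) :
    1 + ZAW n y i p = ZAD n y i (i + p + 1) * ZAD n y (i + 1) (i + p + 2) /
      (ZAD n y i (i + 1) * ZAD n y (i + p + 1) (i + p + 2)) := by
  unfold ZAW
  have h3 := ZAD_pos n hn y hy i (i + 1) (by omega) (by omega) (by omega) (by omega)
  have h4 := ZAD_pos n hn y hy (i + p + 1) (i + p + 2) (by omega) (by omega) (by omega) (by omega)
  rw [eq_div_iff (by positivity), add_mul, div_mul_cancel₀ _ (by positivity)]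
  unfold ZAD
  ring

theorem ZAW_zero (n : ℤ) (y : ℕ → ℝ) (i : ℤ) : ZAW n y i 0 = 0 := by
  simp [ZAW, ZAD]

theorem ZAW_top (n : ℤ) (hn : 1 ≤ n) (y : ℕ → ℝ) (i : ℤ) (hi : i = 0 ∨ i = 1) :
    ZAW n y i (n + 1) = 0 := by
  have : ZAD n y i (i + (n + 1) + 2) = 0 := by
    rcases hi with rfl | rfl
    · rw [show (0 : ℤ) + (n + 1) + 2 = n + 3 by ring]
      simp [ZAD, ZAX, ZAV, show ¬ n + 3 ≤ 0 by omega]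
    · rw [show (1 : ℤ) + (n + 1) + 2 = n + 4 by ring]
      simp [ZAD, ZAX, ZAV, ZAS, show ¬ n + 4 ≤ 0 by omega, show 1 ≤ n + 2 by omega]
  simp [ZAW, this]

theorem ZAW_mesh (n : ℤ) (hn : 1 ≤ n) (y : ℕ → ℝ) (hy : ∀ k, 0 < y k) (i p : ℤ)
    (hi : 1 ≤ i) (hp : 1 ≤ p) (hpn : p ≤ n) (hip : i + p ≤ n + 2) :
    ZAW n y i p * ZAW n y (i - 1) p = (1 + ZAW n y i (p - 1)) * (1 + ZAW n y (i - 1) (p + 1)) := by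
  rw [ZAW_one_add n hn y hy i (p - 1) (by omega) (by omega) (by omega) (by omega),
    ZAW_one_add n hn y hy (i - 1) (p + 1) (by omega) (by omega) (by omega) (by omega)]
  unfold ZAW
  rw [show i - 1 + 1 = i by ring, show i - 1 + p + 1 = i + p by ring,
    show i - 1 + p + 2 = i + p + 1 by ring, show i + (p - 1) + 1 = i + p by ring,
    show i + (p - 1) + 2 = i + p + 1 by ring, show i - 1 + (p + 1) + 1 = i + p + 1 by ring,
    show i - 1 + (p + 1) + 2 = i + p + 2 by ring]
  rw [div_mul_div_comm, div_mul_div_comm]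
  congr 1 <;> ring

theorem ZAW_row (n : ℤ) (hn : 1 ≤ n) (y : ℕ → ℝ) (hy : ∀ k, 0 < y k) (p : ℕ)
    (hp : 1 ≤ p) (hpn : (p : ℤ) ≤ n) : ZAW n y 0 p = y p := by
  obtain ⟨k, rfl⟩ : ∃ k, p = k + 1 := ⟨p - 1, by omega⟩
  have e1 : ((0 : ℤ) + ((k + 1 : ℕ) : ℤ) + 1 - 1).toNat = k + 1 := by omega
  have e2 : ((0 : ℤ) + ((k + 1 : ℕ) : ℤ) + 2 - 1).toNat = k + 2 := by omega
  have hs := ZAS_pos y hy k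
  have hyk := hy (k + 1)
  unfold ZAW ZAD ZAX ZAV
  rw [e1, e2]
  generalize hq : ((k + 1 : ℕ) : ℤ) = q at *
  simp only [show ¬ ((0 : ℤ) + 1 ≤ 0) by omega, show (0 : ℤ) + 1 ≤ n + 2 by omega,
    show ¬ ((0 : ℤ) + q + 1 ≤ 0) by omega, show (0 : ℤ) + q + 1 ≤ n + 2 by omega,
    show ¬ ((0 : ℤ) + q + 2 ≤ 0) by omega, show (0 : ℤ) + q + 2 ≤ n + 2 by omega,
    le_refl, if_true, if_false]
  have : ZAS y (k + 2) = ZAS y (k + 1) + ZAS y (k + 1) / y (k + 1) := by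
    rw [ZAS]; simp
  rw [this]
  simp [ZAS] at hs ⊢
  field_simp

theorem ZAW_sigma (n : ℤ) (hn : 1 ≤ n) (y : ℕ → ℝ) (p : ℤ) (hp : 1 ≤ p) (hpn : p ≤ n) :
    ZAW n y (p + 1) (n + 1 - p) = ZAW n y 0 p := by
  have x3 : ZAX n (n + 3) = - ZAX n 0 := by simp [ZAX, show ¬ n + 3 ≤ 0 by omega]
  have x4 : ZAX n (n + 4) = - ZAX n 1 := by
    simp [ZAX, show ¬ n + 4 ≤ 0 by omega, show 1 ≤ n + 2 by omega]
  have v3 : ZAV n y (n + 3) = - ZAV n y 0 := by simp [ZAV, show ¬ n + 3 ≤ 0 by omega]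
  have v4 : ZAV n y (n + 4) = - ZAV n y 1 := by
    simp [ZAV, ZAS, show ¬ n + 4 ≤ 0 by omega, show 1 ≤ n + 2 by omega]
  unfold ZAW ZAD
  rw [show p + 1 + (n + 1 - p) + 1 = n + 3 by ring, show p + 1 + (n + 1 - p) + 2 = n + 4 by ring,
    show p + 1 + 1 = p + 2 by ring, x3, x4, v3, v4]
  simp only [zero_add]
  congr 1 <;> ring

theorem ZA_main (n : ℤ) (hn : 1 ≤ n) (f : ℤ × ℤ → ℤ) (hca : ZAClusterAdditive n f) (i0 : ℤ)
    (y : ℕ → ℕ → ℝ) (hy : ∀ t k, y t k = Real.exp (t * f (i0, k))) (i : ℕ) :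
    ∀ p : ℕ, 1 ≤ p → (p : ℤ) ≤ n → (i : ℤ) + p ≤ n + 2 →
      ZABd (fun t => Real.log (ZAW n (y t) i p)) (f (i0 + i, p)) := by
  have hpos : ∀ t k, 0 < y t k := fun t k => by rw [hy]; exact Real.exp_pos _
  induction i with
  | zero =>
    intro p hp hpn _
    refine ⟨0, fun t => ?_⟩
    simp only [Nat.cast_zero, add_zero]
    rw [ZAW_row n hn (y t) (hpos t) p hp hpn, hy, Real.log_exp]
    simp
  | succ i ih =>
    intro p hp
    induction p, hp using Nat.le_induction with
    | base =>
      intro hpn hip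
      push_cast at hip hpn ⊢
      have hm := hca (i0 + (i + 1)) 1 le_rfl hn
      rw [show i0 + ((i : ℤ) + 1) - 1 = i0 + i by ring] at hm
      simp only [show ¬ (2 : ℤ) ≤ 1 by omega, if_false, zero_add] at hm
      have hA := ih 1 le_rfl (by push_cast; omega) (by push_cast; omega)
      have hB : ZABd (fun t => Real.log (1 + ZAW n (y t) i (1 + 1)))
          (if 1 ≤ n - 1 then max (f (i0 + i, 1 + 1)) 0 else 0) := by
        split_ifs with h
        · have := ih 2 (by omega) (by push_cast; omega) (by push_cast; omega)
          exact ZABd.softplus (fun t => ZAW_pos n hn (y t) (hpos t) _ _ (by omega) (by omega)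
            (by omega) (by omega)) this
        · have h1 : n = 1 := by omega
          subst h1
          refine ⟨0, fun t => ?_⟩
          beta_reduce
          rw [ZAW_top 1 le_rfl (y t) i (by omega)]
          simp
      have hAB := hB.sub hA
      convert hAB using 1
      · funext t
        have hmesh := ZAW_mesh n hn (y t) (hpos t) (i + 1) 1 (by omega) le_rfl hn (by omega)
        rw [show (1 : ℤ) - 1 = 0 by ring, ZAW_zero, show (i : ℤ) + 1 - 1 = i by ring, add_zero,
          one_mul] at hmesh
        have p1 := ZAW_pos n hn (y t) (hpos t) (i + 1) 1 (by omega) le_rfl hn (by omega)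
        have p2 := ZAW_pos n hn (y t) (hpos t) i 1 (by omega) le_rfl hn (by omega)
        rw [← hmesh, Real.log_mul p1.ne' p2.ne']
        simp
      · rw [Nat.cast_one]
        linarith
    | succ p hp ihp =>
      intro hpn hip
      have ihp' := ihp (by push_cast at hpn; omega) (by push_cast at hip ⊢; omega)
      push_cast at hip hpn ihp' ⊢
      have hm := hca (i0 + (i + 1)) (p + 1) (by omega) hpn
      rw [show i0 + ((i : ℤ) + 1) - 1 = i0 + i by ring, show (p : ℤ) + 1 - 1 = p by ring] at hm
      rw [if_pos (show (2 : ℤ) ≤ p + 1 by omega)] at hm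
      have hA := ih (p + 1) (by omega) (by push_cast; omega) (by push_cast; omega)
      push_cast at hA
      have hC := ZABd.softplus (fun t => ZAW_pos n hn (y t) (hpos t) _ _ (by omega) (by omega)
            (by omega) (by omega)) ihp'
      have hB : ZABd (fun t => Real.log (1 + ZAW n (y t) i (p + 1 + 1)))
          (if (p : ℤ) + 1 ≤ n - 1 then max (f (i0 + i, (p : ℤ) + 1 + 1)) 0 else 0) := by
        split_ifs with h
        · have := ih (p + 1 + 1) (by omega) (by push_cast; omega) (by push_cast; omega)
          push_cast at this
          exact ZABd.softplus (fun t => ZAW_pos n hn (y t) (hpos t) _ _ (by omega) (by omega)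
            (by omega) (by omega)) this
        · have h1 : (p : ℤ) + 1 = n := by omega
          rw [h1]
          refine ⟨0, fun t => ?_⟩
          beta_reduce
          rw [ZAW_top n hn (y t) i (by omega)]
          simp
      have hAB := (hC.add hB).sub hA
      convert hAB using 1
      · funext t
        have hmesh := ZAW_mesh n hn (y t) (hpos t) (i + 1) (p + 1) (by omega) (by omega)
          hpn (by omega)
        rw [show (p : ℤ) + 1 - 1 = p by ring, show (i : ℤ) + 1 - 1 = i by ring] at hmesh
        have p1 := ZAW_pos n hn (y t) (hpos t) (i + 1) (p + 1) (by omega) (by omega) hpn (by omega)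
        have p2 := ZAW_pos n hn (y t) (hpos t) i (p + 1) (by omega) (by omega) hpn (by omega)
        have p3 := ZAW_pos n hn (y t) (hpos t) (i + 1) p (by omega) (by omega) (by omega) (by omega)
        have hl := congrArg Real.log hmesh
        have hne : 1 + ZAW n (y t) i (p + 1 + 1) ≠ 0 := by
          intro h0
          rw [h0, mul_zero] at hmesh
          exact (mul_pos p1 p2).ne' hmesh
        rw [Real.log_mul p1.ne' p2.ne', Real.log_mul (by linarith) hne] at hl
        linarith
      · linarith

theorem stmt_19 (n : ℤ) (hn : 1 ≤ n) (f : ℤ × ℤ → ℤ)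
    (hca : ZAClusterAdditive n f) :
    ∀ z : ℤ × ℤ, 1 ≤ z.2 → z.2 ≤ n → f (ZASigma n z) = f z := by
  rintro ⟨i0, p⟩ hp hpn
  simp only at hp hpn
  have key := ZA_main n hn f hca i0 (fun t k => Real.exp (t * f (i0, k))) (fun _ _ => rfl)
  have h1 := key 0 p.toNat (by omega) (by omega) (by push_cast; omega)
  have h2 := key (p + 1).toNat (n + 1 - p).toNat (by omega) (by omega) (by omega)
  rw [show (((p + 1).toNat : ℕ) : ℤ) = p + 1 by omega,
    show (((n + 1 - p).toNat : ℕ) : ℤ) = n + 1 - p by omega] at h2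
  rw [show ((p.toNat : ℕ) : ℤ) = p by omega] at h1
  simp only [ZAW_sigma n hn _ p hp hpn] at h2
  simp only [Nat.cast_zero, add_zero] at h1
  have := h2.unique h1
  simp only [ZASigma]
  rw [← this, add_assoc]
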